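/- Let f: [0,1] → [0,1] be a continuous interval map with shadowing. Then any two distinct maximal ω-limit sets of f are disjoint. -/

import Mathlib

/-!
Write `A = ω(x)` and `B = ω(y)` for the two maximal sets and suppose that they share a point `p`
and that `a ∈ A \ B`. It is enough to find one orbit whose ω-limit set contains `C = A ∪ B`, for
then maximality gives `A = B`. The set `C` is chain transitive, since `A` and `B` are, and they meet.

The engine is `exists_omegaLimitSet_superset`. Suppose that `y₀ < t < y₁`, that for every `δ` there
are `δ`-chains *of equal length* from `p` to `y₀` and to `y₁`, and that `t` can be joined by
`δ`-chains to all of `C`. Let `W` be a small closed interval around `t`. For `q ∈ C`, shadow the two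
pseudo-orbits `t → q → p → y₀` and `t → q → p → y₁` by points `u, v ∈ W`. The interval between the
images of `u` and `v` at the time of the visit to `q` is close to `q`, and by the intermediate value
theorem it is later stretched over the whole of `W`. Thus `W` contains a closed set which moves near
`q` and then covers `W` again, and a nested intersection yields a point whose orbit visits all of
`C` infinitely often.

It remains to find `y₀, t, y₁`.
* If `A ∩ B` contains a periodic point, take it as `p`. The set `A` is infinite, since chains inside
  a finite set are true orbits and would place `a` in `B`. Hence three points of `A` are reached from
  `p` by chains whose lengths agree modulo the period, and waiting at `p` makes the lengths equal.
* Otherwise, let `m` be a limit of the points `f^[l] p`, where `l` is the length of ever finer chains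
  from `p` to `a`. Then `m ∈ A ∩ B` is different from `a`, is reached from `p` in the same time as
  `a`, and has an infinite orbit. Some `t` strictly between `a` and `m` chains to `C`: either the
  orbit of the midpoint comes arbitrarily close to that of `m`, or the segment from `m` to the
  midpoint always has image of length at least some `η`, and then some image of it covers
  another point of the orbit of `m`.
-/

/-- `x` is a `δ`-pseudo-orbit for `f` contained in `A`, and `z ∈ A` `ε`-shadows it. -/
def ShadowingOn {X : Type*} [MetricSpace X] (f : X → X) (A : Set X) : Prop :=
  ∀ ε : ℝ, 0 < ε → ∃ δ : ℝ, 0 < δ ∧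
    ∀ x : ℕ → X, (∀ n, x n ∈ A) → (∀ n, dist (f (x n)) (x (n + 1)) < δ) →
      ∃ z ∈ A, ∀ n, dist (f^[n] z) (x n) < ε

def LimitShadowingOn {X : Type*} [MetricSpace X] (f : X → X) (A : Set X) : Prop :=
  ∀ x : ℕ → X, (∀ n, x n ∈ A) →
    Filter.Tendsto (fun n => dist (f (x n)) (x (n + 1))) Filter.atTop (nhds 0) →
    ∃ z ∈ A, Filter.Tendsto (fun n => dist (f^[n] z) (x n)) Filter.atTop (nhds 0)

def SLimitShadowingOn {X : Type*} [MetricSpace X] (f : X → X) (A : Set X) : Prop :=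
  ∀ ε : ℝ, 0 < ε → ∃ δ : ℝ, 0 < δ ∧
    (∀ x : ℕ → X, (∀ n, x n ∈ A) → (∀ n, dist (f (x n)) (x (n + 1)) < δ) →
      ∃ z ∈ A, ∀ n, dist (f^[n] z) (x n) < ε) ∧
    (∀ x : ℕ → X, (∀ n, x n ∈ A) → (∀ n, dist (f (x n)) (x (n + 1)) < δ) →
      Filter.Tendsto (fun n => dist (f (x n)) (x (n + 1))) Filter.atTop (nhds 0) →
      ∃ z ∈ A, (∀ n, dist (f^[n] z) (x n) < ε) ∧
        Filter.Tendsto (fun n => dist (f^[n] z) (x n)) Filter.atTop (nhds 0))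
/-- The ω-limit set of `x` under `f`: the set of limit points of the forward orbit. -/
def OmegaLimitSet {X : Type*} [TopologicalSpace X] (f : X → X) (x : X) : Set X :=
  {y | ∃ φ : ℕ → ℕ, StrictMono φ ∧
    Filter.Tendsto (fun k => f^[φ k] x) Filter.atTop (nhds y)}

/-- `A` is the ω-limit set of some point of `[0,1]` under the interval map `f`. -/
def IsOmegaLimitSetOn (f : ℝ → ℝ) (A : Set ℝ) : Prop :=
  ∃ x ∈ Set.Icc (0 : ℝ) 1, A = OmegaLimitSet f x

/-- `A` is a maximal ω-limit set of the interval map `f`. -/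
def IsMaximalOmegaLimitSet (f : ℝ → ℝ) (A : Set ℝ) : Prop :=
  IsOmegaLimitSetOn f A ∧ ∀ B : Set ℝ, IsOmegaLimitSetOn f B → A ⊆ B → B = A

namespace OmegaShadowing

open Set Filter Topology

/-! ### Chains -/

/-- `Chain f S δ n x y`: there is a finite `δ`-pseudo-orbit of `f` with `n` steps from `x` to `y`,
all of whose points lie in `S`. -/
inductive Chain (f : ℝ → ℝ) (S : Set ℝ) (δ : ℝ) : ℕ → ℝ → ℝ → Prop
  | nil {x : ℝ} (hx : x ∈ S) : Chain f S δ 0 x x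
  | cons {n : ℕ} {x y z : ℝ} (hx : x ∈ S) (hxy : dist (f x) y < δ) (h : Chain f S δ n y z) :
      Chain f S δ (n + 1) x z

variable {f : ℝ → ℝ} {S : Set ℝ} {δ : ℝ}

theorem Chain.trans {n k : ℕ} {x y z : ℝ} (h : Chain f S δ n x y) (h' : Chain f S δ k y z) :
    Chain f S δ (n + k) x z := by
  induction h with
  | nil hx => simpa using h'
  | @cons n x y z hx hxy h ih =>
    have := Chain.cons hx hxy (ih h')
    rwa [show n + 1 + k = n + k + 1 by omega]

theorem Chain.mono {T : Set ℝ} {δ' : ℝ} (hST : S ⊆ T) (hδ : δ ≤ δ') {n : ℕ} {x y : ℝ}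
    (h : Chain f S δ n x y) : Chain f T δ' n x y := by
  induction h with
  | nil hx => exact .nil (hST hx)
  | cons hx hxy h ih => exact .cons (hST hx) (hxy.trans_le hδ) ih

/-- A true orbit segment is a chain, even after moving its last point by less than `δ`. -/
theorem chain_of_dist_iterate_lt (hS : MapsTo f S S) (hδ : 0 < δ) {y : ℝ} (hy : y ∈ S) (n : ℕ) :
    ∀ x ∈ S, dist (f^[n + 1] x) y < δ → Chain f S δ (n + 1) x y := by
  induction n with
  | zero => intro x hx h; exact .cons hx h (.nil hy)
  | succ n ih =>
    intro x hx h
    exact .cons hx (by simpa using hδ) (ih (f x) (hS hx) h)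

theorem Chain.exists_seq {n : ℕ} {x y : ℝ} (h : Chain f S δ n x y) (s : ℕ → ℝ) (hs0 : s 0 = y)
    (hsS : ∀ i, s i ∈ S) (hs : ∀ i, dist (f (s i)) (s (i + 1)) < δ) :
    ∃ s' : ℕ → ℝ, s' 0 = x ∧ (∀ i, s' (n + i) = s i) ∧ (∀ i, s' i ∈ S) ∧
      ∀ i, dist (f (s' i)) (s' (i + 1)) < δ := by
  induction h with
  | nil hx => exact ⟨s, hs0, by simp, hsS, hs⟩
  | @cons n x y z hx hxy h ih =>
    obtain ⟨s', h0, h1, h2, h3⟩ := ih hs0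
    refine ⟨fun i => Nat.casesOn i x s', rfl, ?_, ?_, ?_⟩
    · intro i
      rw [show n + 1 + i = (n + i) + 1 by omega]
      exact h1 i
    · rintro (_ | i)
      · exact hx
      · exact h2 i
    · rintro (_ | i)
      · change dist (f x) (s' 0) < δ
        rwa [h0]
      · exact h3 i

/-- If `δ` serves `ε` in the definition of shadowing, two consecutive `δ`-chains are followed by one
orbit, up to `ε` at both ends and at the junction. -/
theorem exists_shadow (hS : MapsTo f S S) {ε : ℝ} (hδ : 0 < δ)
    (hsh : ∀ x : ℕ → ℝ, (∀ n, x n ∈ S) → (∀ n, dist (f (x n)) (x (n + 1)) < δ) →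
      ∃ z ∈ S, ∀ n, dist (f^[n] z) (x n) < ε)
    {n k : ℕ} {x y z : ℝ} (h : Chain f S δ n x y) (h' : Chain f S δ k y z) (hz : z ∈ S) :
    ∃ u ∈ S, dist u x < ε ∧ dist (f^[n] u) y < ε ∧ dist (f^[n + k] u) z < ε := by
  obtain ⟨s, h0, h1, h2, h3⟩ := h'.exists_seq (fun i => f^[i] z) rfl
    (fun i => hS.iterate i hz)
    (fun i => by simpa [← Function.iterate_succ_apply' f] using hδ)
  obtain ⟨s', h0', h1', h2', h3'⟩ := h.exists_seq s h0 h2 h3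
  obtain ⟨u, hu, hus⟩ := hsh s' h2' h3'
  refine ⟨u, hu, ?_, ?_, ?_⟩
  · simpa [h0'] using hus 0
  · have := hus n
    rwa [← add_zero n, h1', h0, add_zero] at this
  · have := hus (n + k)
    rw [h1'] at this
    have hk := h1 0
    simp only [add_zero, Function.iterate_zero, id] at hk
    rwa [hk] at this

/-! ### ω-limit sets -/

theorem mem_omega_iff {x y : ℝ} :
    y ∈ OmegaLimitSet f x ↔ ∀ ε > 0, ∀ N : ℕ, ∃ n ≥ N, dist (f^[n] x) y < ε := by
  constructor
  · rintro ⟨φ, hφ, hlim⟩ ε hε N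
    obtain ⟨K, hK⟩ := Metric.tendsto_atTop.1 hlim ε hε
    exact ⟨φ (max K N), (le_max_right K N).trans (hφ.id_le _), hK _ (le_max_left _ _)⟩
  · intro h
    have : MapClusterPt y atTop (fun n => f^[n] x) := by
      rw [Metric.nhds_basis_ball.mapClusterPt_iff_frequently]
      intro ε hε
      exact frequently_atTop.2 fun N => h ε hε N
    exact MapClusterPt.tendsto_subseq this

theorem isClosed_omega (x : ℝ) : IsClosed (OmegaLimitSet f x) := by
  rw [← isSeqClosed_iff_isClosed]
  intro u y hu huy
  rw [mem_omega_iff]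
  intro ε hε N
  obtain ⟨K, hK⟩ := Metric.tendsto_atTop.1 huy (ε / 2) (by linarith)
  obtain ⟨n, hn, hd⟩ := mem_omega_iff.1 (hu K) (ε / 2) (by linarith) N
  refine ⟨n, hn, ?_⟩
  linarith [dist_triangle (f^[n] x) (u K) y, hK K le_rfl]

theorem omega_subset (hScl : IsClosed S) (hS : MapsTo f S S) {x : ℝ} (hx : x ∈ S) :
    OmegaLimitSet f x ⊆ S := by
  rintro y ⟨φ, -, hlim⟩
  exact hScl.mem_of_tendsto hlim (Eventually.of_forall fun k => hS.iterate _ hx)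

theorem mapsTo_omega (hf : Continuous f) (x : ℝ) :
    MapsTo f (OmegaLimitSet f x) (OmegaLimitSet f x) := by
  rintro y ⟨φ, hφ, hlim⟩
  refine ⟨fun k => φ k + 1, fun i j h => by simpa using hφ h, ?_⟩
  simp only [Function.iterate_succ_apply']
  exact (hf.tendsto y).comp hlim

theorem omega_attracts (hScpt : IsCompact S) (hS : MapsTo f S S) {x : ℝ} (hx : x ∈ S)
    {η : ℝ} (hη : 0 < η) :
    ∃ N, ∀ n ≥ N, ∃ c ∈ OmegaLimitSet f x, dist (f^[n] x) c < η := by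
  by_contra! hcon
  obtain ⟨φ, hφ, hφ'⟩ := extraction_of_frequently_atTop (frequently_atTop.2 hcon)
  obtain ⟨c, -, ψ, hψ, hlim⟩ := hScpt.tendsto_subseq (x := fun k => f^[φ k] x)
    (fun k => hS.iterate _ hx)
  have hc : c ∈ OmegaLimitSet f x := ⟨φ ∘ ψ, hφ.comp hψ, hlim⟩
  obtain ⟨K, hK⟩ := Metric.tendsto_atTop.1 hlim η hη
  exact absurd (hK K le_rfl) (not_lt.2 (hφ' (ψ K) c hc))

/-- An ω-limit set is internally chain transitive: late orbit segments are replaced point by point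
by nearby points of the ω-limit set. -/
theorem omega_chain (hf : Continuous f) (hScpt : IsCompact S) (hS : MapsTo f S S) {x : ℝ}
    (hx : x ∈ S) {a b : ℝ} (ha : a ∈ OmegaLimitSet f x) (hb : b ∈ OmegaLimitSet f x)
    (hδ : 0 < δ) : ∃ n, Chain f (OmegaLimitSet f x) δ n a b := by
  have huc := hScpt.uniformContinuousOn_of_continuous hf.continuousOn
  obtain ⟨η, hη, hηδ⟩ := Metric.uniformContinuousOn_iff.1 huc (δ / 2) (by linarith)
  have hsub := omega_subset hScpt.isClosed hS hx
  set ζ := min η (δ / 2) with hζ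
  have hζ0 : 0 < ζ := lt_min hη (by linarith)
  obtain ⟨N, hN⟩ := omega_attracts hScpt hS hx hζ0
  have step : ∀ i, ∀ c ∈ OmegaLimitSet f x, ∀ d, dist (f^[i] x) c < ζ →
      dist (f^[i + 1] x) d < ζ → dist (f c) d < δ := by
    intro i c hc d h1 h2
    have h3 := hηδ _ (hS.iterate i hx) _ (hsub hc) (h1.trans_le (min_le_left _ _))
    rw [← Function.iterate_succ_apply' f] at h3
    have h4 := h2.trans_le (min_le_right η (δ / 2))
    linarith [dist_triangle (f c) (f^[i + 1] x) d, dist_comm (f c) (f^[i + 1] x)]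
  have key : ∀ k i, N ≤ i → ∀ c ∈ OmegaLimitSet f x, dist (f^[i] x) c < ζ →
      dist (f^[i + (k + 1)] x) b < ζ → Chain f (OmegaLimitSet f x) δ (k + 1) c b := by
    intro k
    induction k with
    | zero =>
      intro i _ c hc h1 h2
      exact .cons hc (step i c hc b h1 h2) (.nil hb)
    | succ k ih =>
      intro i hi c hc h1 h2
      obtain ⟨d, hd, hdd⟩ := hN (i + 1) (by omega)
      refine .cons hc (step i c hc d h1 hdd) (ih (i + 1) (by omega) d hd hdd ?_)
      rwa [show i + 1 + (k + 1) = i + (k + 1 + 1) by omega]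
  obtain ⟨i, hi, hia⟩ := mem_omega_iff.1 ha ζ hζ0 N
  obtain ⟨j, hj, hjb⟩ := mem_omega_iff.1 hb ζ hζ0 (i + 1)
  obtain ⟨k, rfl⟩ : ∃ k, j = i + (k + 1) := ⟨j - i - 1, by omega⟩
  exact ⟨_, key k i hi a ha hia hjb⟩

/-! ### Constructing large ω-limit sets -/

/-- If for every `q ∈ C` some closed part of the compact set `W` moves close to `q` and later covers
`W` again, then one orbit starting in `W` accumulates on all of `C`. -/
theorem exists_omega_of_returns (hf : Continuous f) {W C : Set ℝ} (hW : IsCompact W)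
    (hWne : W.Nonempty) (hCne : C.Nonempty)
    (h : ∀ q ∈ C, ∀ ε > 0, ∃ n k : ℕ, ∃ J ⊆ W, 0 < n + k ∧ IsClosed J ∧
      (∀ u ∈ J, dist (f^[n] u) q < ε) ∧ W ⊆ f^[n + k] '' J) :
    ∃ z ∈ W, C ⊆ OmegaLimitSet f z := by
  have := hCne.to_subtype
  -- every entry of a dense sequence of `C` is repeated infinitely often in `d`
  let d : ℕ → C := fun k => TopologicalSpace.denseSeq C (Nat.unpair k).1
  choose! n k J hJW hpos hJcl hJq hJcov using h
  let e : ℕ → ℝ := fun i => 1 / ((i : ℝ) + 1)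
  have he : ∀ i, 0 < e i := fun i => by positivity
  -- `st i` is a pair of a closed set, whose points make the first `i` prescribed visits, and a time
  -- at which the image of that set covers `W`
  let st : ℕ → Set ℝ × ℕ := fun i => Nat.rec (W, 0)
    (fun i P => (P.1 ∩ f^[P.2] ⁻¹' J (d i) (e i), P.2 + (n (d i) (e i) + k (d i) (e i)))) i
  have hst : ∀ i, st (i + 1) = ((st i).1 ∩ f^[(st i).2] ⁻¹' J (d i) (e i),
      (st i).2 + (n (d i) (e i) + k (d i) (e i))) := fun i => rfl
  have hcov : ∀ i, W ⊆ f^[(st i).2] '' (st i).1 := by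
    intro i
    induction i with
    | zero => intro w hw; exact ⟨w, hw, rfl⟩
    | succ i ih =>
      intro w hw
      obtain ⟨j, hj, rfl⟩ := hJcov (d i) (d i).2 (e i) (he i) hw
      obtain ⟨κ, hκ, rfl⟩ := ih (hJW (d i) (d i).2 (e i) (he i) hj)
      refine ⟨κ, ⟨hκ, hj⟩, ?_⟩
      rw [hst, add_comm, Function.iterate_add_apply]
  have hcl : ∀ i, IsClosed (st i).1 := by
    intro i
    induction i with
    | zero => exact hW.isClosed
    | succ i ih =>
      exact ih.inter ((hJcl (d i) (d i).2 (e i) (he i)).preimage (hf.iterate _))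
  have hT : ∀ i, i ≤ (st i).2 := by
    intro i
    induction i with
    | zero => exact Nat.zero_le _
    | succ i ih =>
      rw [hst]
      have := hpos (d i) (d i).2 (e i) (he i)
      simp only
      omega
  have hne : ∀ i, (st i).1.Nonempty := fun i => by
    obtain ⟨w, hw⟩ := hWne
    obtain ⟨κ, hκ, -⟩ := hcov i hw
    exact ⟨κ, hκ⟩
  obtain ⟨z, hz⟩ := IsCompact.nonempty_iInter_of_sequence_nonempty_isCompact_isClosed
    (fun i => (st i).1) (fun i => by rw [hst]; exact inter_subset_left) hne hW hcl
  rw [mem_iInter] at hz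
  refine ⟨z, hz 0, fun q hq => mem_omega_iff.2 fun ε hε N => ?_⟩
  obtain ⟨l, hl⟩ := (TopologicalSpace.denseRange_denseSeq C).exists_dist_lt ⟨q, hq⟩
    (show 0 < ε / 2 by linarith)
  obtain ⟨N', hN'⟩ := exists_nat_one_div_lt (show 0 < ε / 2 by linarith)
  set i := Nat.pair l (max N N') with hi
  have hdi : d i = TopologicalSpace.denseSeq C l := by simp [d, hi]
  have hiN : max N N' ≤ i := Nat.right_le_pair _ _
  have hei : e i ≤ 1 / ((N' : ℝ) + 1) := by
    apply one_div_le_one_div_of_le (by positivity)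
    have : (N' : ℝ) ≤ i := by exact_mod_cast (le_max_right N N').trans hiN
    linarith
  have hzi := hz (i + 1)
  rw [hst] at hzi
  have h1 := hJq (d i) (d i).2 (e i) (he i) _ hzi.2
  rw [← Function.iterate_add_apply] at h1
  refine ⟨n (d i) (e i) + (st i).2, ?_, ?_⟩
  · have := hT i
    have := le_max_left N N'
    omega
  · have h2 : dist (d i : ℝ) q < ε / 2 := by
      rw [hdi, dist_comm]; exact hl
    linarith [dist_triangle (f^[n (d i) (e i) + (st i).2] z) (d i : ℝ) q]

/-- The covering argument: `t` lies strictly between two points `y₀`, `y₁` that are reached from `p`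
by arbitrarily fine chains of equal length. Shadowing `t → q → p → y₀` and `t → q → p → y₁` and
applying the intermediate value theorem shows that a small interval around `t` meets the hypothesis
of `exists_omega_of_returns`. -/
theorem exists_omegaLimitSet_superset (hf : Continuous f)
    (hI : MapsTo f (Icc (0 : ℝ) 1) (Icc 0 1)) (hsh : ShadowingOn f (Icc (0 : ℝ) 1))
    {C : Set ℝ} {p y₀ t y₁ : ℝ} (hy₀ : y₀ ∈ Icc (0 : ℝ) 1) (hy₁ : y₁ ∈ Icc (0 : ℝ) 1)
    (h₀ : y₀ < t) (h₁ : t < y₁) (hpC : p ∈ C)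
    (hphase : ∀ δ > 0, ∃ n, Chain f (Icc 0 1) δ n p y₀ ∧ Chain f (Icc 0 1) δ n p y₁)
    (htC : ∀ δ > 0, ∀ q ∈ C, ∃ n, Chain f (Icc 0 1) δ n t q)
    (hCp : ∀ δ > 0, ∀ q ∈ C, ∃ n, Chain f (Icc 0 1) δ n q p) :
    ∃ z ∈ Icc (0 : ℝ) 1, C ⊆ OmegaLimitSet f z := by
  obtain ⟨r, hr, hr₀, hr₁⟩ : ∃ r > 0, 2 * r ≤ t - y₀ ∧ 2 * r ≤ y₁ - t :=
    ⟨min (t - y₀) (y₁ - t) / 2, half_pos (lt_min (by linarith) (by linarith)),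
      by linarith [min_le_left (t - y₀) (y₁ - t)], by linarith [min_le_right (t - y₀) (y₁ - t)]⟩
  have hWI : Icc (t - r) (t + r) ⊆ Icc (0 : ℝ) 1 :=
    Icc_subset_Icc (by linarith [hy₀.1]) (by linarith [hy₁.2])
  obtain ⟨z, hz, hzC⟩ := exists_omega_of_returns hf (W := Icc (t - r) (t + r)) (C := C)
    isCompact_Icc ⟨t, by constructor <;> linarith⟩ ⟨p, hpC⟩ (by
      intro q hq ε hε
      obtain ⟨δ, hδ, hδsh⟩ := hsh (min ε r) (lt_min hε hr)
      obtain ⟨n, hn⟩ := htC δ hδ q hq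
      obtain ⟨k, hk⟩ := hCp δ hδ q hq
      obtain ⟨l, hl₀, hl₁⟩ := hphase δ hδ
      obtain ⟨u, -, hu1, hu2, hu3⟩ := exists_shadow hI hδ hδsh hn (hk.trans hl₀) hy₀
      obtain ⟨v, -, hv1, hv2, hv3⟩ := exists_shadow hI hδ hδsh hn (hk.trans hl₁) hy₁
      have hur := hu1.trans_le (min_le_right _ _)
      have hvr := hv1.trans_le (min_le_right _ _)
      have hur' := hu3.trans_le (min_le_right _ _)
      have hvr' := hv3.trans_le (min_le_right _ _)
      have huε := hu2.trans_le (min_le_left _ _)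
      have hvε := hv2.trans_le (min_le_left _ _)
      rw [Real.dist_eq, abs_lt] at hur hvr hur' hvr'
      refine ⟨n, k + l, uIcc u v ∩ f^[n] ⁻¹' uIcc (f^[n] u) (f^[n] v), ?_, ?_, ?_, ?_, ?_⟩
      · exact inter_subset_left.trans (uIcc_subset_Icc (by constructor <;> linarith)
          (by constructor <;> linarith))
      · -- `u ∈ W` is moved out of `W`, so time has passed
        rcases Nat.eq_zero_or_pos (n + (k + l)) with h0 | h0
        · rw [h0, Function.iterate_zero, id] at hur'
          linarith
        · exact h0
      · exact isClosed_Icc.inter (isClosed_Icc.preimage (hf.iterate n))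
      · intro w hw
        have : uIcc (f^[n] u) (f^[n] v) ⊆ Metric.ball q ε := by
          have hoc : OrdConnected (Metric.ball q ε) := (convex_ball q ε).ordConnected
          exact hoc.uIcc_subset huε hvε
        exact this hw.2
      · intro w hw
        have hw' : w ∈ uIcc (f^[k + l] (f^[n] u)) (f^[k + l] (f^[n] v)) := by
          rw [← Function.iterate_add_apply, ← Function.iterate_add_apply, add_comm (k + l) n]
          apply Icc_subset_uIcc
          constructor <;> linarith [hw.1, hw.2]
        obtain ⟨ρ, hρ, rfl⟩ := intermediate_value_uIcc (hf.iterate (k + l)).continuousOn hw'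
        obtain ⟨j, hj, rfl⟩ := intermediate_value_uIcc (hf.iterate n).continuousOn hρ
        exact ⟨j, ⟨hj, hρ⟩, by rw [add_comm, Function.iterate_add_apply]⟩)
  exact ⟨z, hWI hz, hzC⟩

/-! ### Points reached in equal time -/

/-- If `p` is periodic and infinitely many points of `D` can be reached from `p` by arbitrarily fine
chains, then some two of them, with a third point of `D` between them, are reached by chains of equal
length: fix the length modulo the period and let the shorter chain wait at `p`. -/
theorem exists_phase_of_periodic {p : ℝ} {k : ℕ} (hk : 0 < k) (hS : MapsTo f S S) (hp : p ∈ S)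
    (hper : f^[k] p = p) {D : Set ℝ} (hD : D.Infinite)
    (hch : ∀ a ∈ D, ∀ δ > 0, ∃ n, Chain f S δ n p a) :
    ∃ y₀ ∈ D, ∃ t ∈ D, ∃ y₁ ∈ D, y₀ < t ∧ t < y₁ ∧
      ∀ δ > 0, ∃ n, Chain f S δ n p y₀ ∧ Chain f S δ n p y₁ := by
  have hres : ∀ a ∈ D, ∃ r : Fin k, ∀ δ > 0, ∃ n, n % k = r ∧ Chain f S δ n p a := by
    intro a ha
    by_contra! hcon
    choose ε hε hno using hcon
    have : Nonempty (Fin k) := ⟨⟨0, hk⟩⟩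
    obtain ⟨r₀, hr₀⟩ := Finite.exists_min ε
    obtain ⟨n, hn⟩ := hch a ha (ε r₀) (hε r₀)
    exact hno ⟨n % k, Nat.mod_lt _ hk⟩ n rfl (hn.mono subset_rfl (hr₀ _))
  have : Nonempty (Fin k) := ⟨⟨0, hk⟩⟩
  choose! r hr using hres
  have := hD.to_subtype
  obtain ⟨r₀, hr₀⟩ := Finite.exists_infinite_fiber (fun a : D => r a)
  have hE : (Subtype.val '' ((fun a : D => r a) ⁻¹' {r₀})).Infinite :=
    (infinite_coe_iff.1 hr₀).image Subtype.val_injective.injOn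
  obtain ⟨F, hFE, hF⟩ := hE.exists_subset_card_eq 3
  have hmem : ∀ i, F.orderEmbOfFin hF i ∈ D ∧ r (F.orderEmbOfFin hF i) = r₀ := by
    intro i
    obtain ⟨a, ha, hai⟩ := hFE (F.orderEmbOfFin_mem hF i)
    rw [← hai]
    exact ⟨a.2, ha⟩
  refine ⟨_, (hmem 0).1, _, (hmem 1).1, _, (hmem 2).1, (F.orderEmbOfFin hF).strictMono (by decide),
    (F.orderEmbOfFin hF).strictMono (by decide), fun δ hδ => ?_⟩
  have hloop : ∀ j, Chain f S δ (k * j) p p := by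
    intro j
    induction j with
    | zero => exact .nil hp
    | succ j ih =>
      obtain ⟨l, rfl⟩ : ∃ l, k = l + 1 := ⟨k - 1, by omega⟩
      exact ih.trans (chain_of_dist_iterate_lt hS hδ hp l p hp (by rw [hper]; simpa using hδ))
  have hpad : ∀ n n' : ℕ, n % k = n' % k → n ≤ n' → ∀ y, Chain f S δ n p y →
      Chain f S δ n' p y := by
    intro n n' hmod hle y hy
    obtain ⟨j, hj⟩ := (Nat.modEq_iff_dvd' hle).1 hmod
    have := (hloop j).trans hy
    rwa [← hj, Nat.sub_add_cancel hle] at this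
  obtain ⟨n, hn, hcn⟩ := hr _ (hmem 0).1 δ hδ
  obtain ⟨n', hn', hcn'⟩ := hr _ (hmem 2).1 δ hδ
  rw [(hmem 0).2] at hn
  rw [(hmem 2).2] at hn'
  rcases le_total n n' with h | h
  · exact ⟨n', hpad n n' (hn.trans hn'.symm) h _ hcn, hcn'⟩
  · exact ⟨n, hcn, hpad n' n (hn'.trans hn.symm) h _ hcn'⟩

/-- If the orbit of `m` is infinite, then strictly between `m` and any other point `a` there is a
point from which arbitrarily fine chains lead to the orbit of `m`. -/
theorem exists_between_chain (hf : Continuous f) (hI : MapsTo f (Icc (0 : ℝ) 1) (Icc 0 1))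
    {m a : ℝ} (hm : m ∈ Icc (0 : ℝ) 1) (ha : a ∈ Icc (0 : ℝ) 1) (hma : m ≠ a)
    (hinj : Function.Injective fun j => f^[j] m) :
    ∃ t, min m a < t ∧ t < max m a ∧
      ∀ δ > 0, ∃ j n, Chain f (Icc 0 1) δ n t (f^[j] m) := by
  have hbetween : ∀ t ∈ uIcc m ((m + a) / 2), t ≠ m → min m a < t ∧ t < max m a := by
    intro t ht htm
    rcases lt_or_gt_of_ne hma with h | h
    · rw [uIcc_of_le (by linarith)] at ht
      rw [min_eq_left h.le, max_eq_right h.le]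
      exact ⟨lt_of_le_of_ne ht.1 htm.symm, by linarith [ht.2]⟩
    · rw [uIcc_of_ge (by linarith)] at ht
      rw [min_eq_right h.le, max_eq_left h.le]
      exact ⟨by linarith [ht.1], lt_of_le_of_ne ht.2 htm⟩
  have hI' : ∀ t, min m a < t ∧ t < max m a → t ∈ Icc (0 : ℝ) 1 := fun t ht =>
    ⟨(le_min hm.1 ha.1).trans ht.1.le, ht.2.le.trans (max_le hm.2 ha.2)⟩
  set s := (m + a) / 2 with hs
  have hsb := hbetween s right_mem_uIcc (fun h => hma (by linarith))
  by_cases hclose : ∀ δ > 0, ∃ j, dist (f^[j + 1] s) (f^[j + 1] m) < δ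
  · refine ⟨s, hsb.1, hsb.2, fun δ hδ => ?_⟩
    obtain ⟨j, hj⟩ := hclose δ hδ
    exact ⟨j + 1, j + 1, chain_of_dist_iterate_lt hI hδ (hI.iterate _ hm) j s (hI' s hsb) hj⟩
  · push Not at hclose
    obtain ⟨η, hη, hfar⟩ := hclose
    set c : ℕ → ℝ := fun j => f^[j + 1] m with hc
    -- an image of the segment from `m` to `s` that starts at `c j` must jump over `c i` or `c k`
    have key : ∀ i j k, c i < c j → c j < c k → c k - c i < η →
        ∃ t, min m a < t ∧ t < max m a ∧
          ∀ δ > 0, ∃ j n, Chain f (Icc 0 1) δ n t (f^[j] m) := by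
      intro i j k hij hjk hik
      have hd := hfar j
      rw [Real.dist_eq] at hd
      obtain ⟨l, hl, hlj⟩ : ∃ l, c l ∈ uIcc (f^[j + 1] m) (f^[j + 1] s) ∧ c l ≠ c j := by
        simp only [hc] at hij hjk hik ⊢
        rcases le_abs.1 hd with h | h
        · exact ⟨k, Icc_subset_uIcc ⟨hjk.le, by linarith⟩, hjk.ne'⟩
        · exact ⟨i, Icc_subset_uIcc' ⟨by linarith, hij.le⟩, hij.ne⟩
      obtain ⟨t, ht, htl⟩ := intermediate_value_uIcc (hf.iterate (j + 1)).continuousOn hl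
      have htb := hbetween t ht (by rintro rfl; exact hlj htl.symm)
      refine ⟨t, htb.1, htb.2, fun δ hδ => ⟨l + 1, j + 1, ?_⟩⟩
      refine chain_of_dist_iterate_lt hI hδ (hI.iterate _ hm) j t (hI' t htb) ?_
      rw [htl]
      simpa [hc] using hδ
    obtain ⟨c₀, -, φ, hφ, hlim⟩ := isCompact_Icc.tendsto_subseq (x := c)
      (fun j => hI.iterate (j + 1) hm)
    obtain ⟨K, hK⟩ := Metric.tendsto_atTop.1 hlim (η / 2) (by linarith)
    have hcinj : ∀ i j, i ≠ j → c (φ i) ≠ c (φ j) := by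
      intro i j hij h
      have := hinj h
      exact hij (hφ.injective (by omega))
    have h0 := hK K le_rfl
    have h1 := hK (K + 1) (by omega)
    have h2 := hK (K + 2) (by omega)
    simp only [Function.comp, Real.dist_eq, abs_lt] at h0 h1 h2
    rcases lt_or_gt_of_ne (hcinj K (K + 1) (by omega)) with h01 | h01 <;>
    rcases lt_or_gt_of_ne (hcinj K (K + 2) (by omega)) with h02 | h02 <;>
    rcases lt_or_gt_of_ne (hcinj (K + 1) (K + 2) (by omega)) with h12 | h12
    · exact key _ _ _ h01 h12 (by linarith)
    · exact key _ _ _ h02 h12 (by linarith)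
    · exact absurd (h01.trans h12) (not_lt.2 h02.le)
    · exact key _ _ _ h02 h01 (by linarith)
    · exact key _ _ _ h01 h02 (by linarith)
    · exact absurd (h02.trans h12) (not_lt.2 h01.le)
    · exact key _ _ _ h12 h02 (by linarith)
    · exact key _ _ _ h12 h01 (by linarith)

/-! ### Unions of intersecting ω-limit sets -/

/-- With shadowing, two ω-limit sets with a common point, the first not contained in the second, lie
in a single ω-limit set. -/
theorem exists_omega_superset_union (hf : Continuous f)
    (hI : MapsTo f (Icc (0 : ℝ) 1) (Icc 0 1)) (hsh : ShadowingOn f (Icc (0 : ℝ) 1))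
    {x y p a : ℝ} (hx : x ∈ Icc (0 : ℝ) 1) (hy : y ∈ Icc (0 : ℝ) 1)
    (hpx : p ∈ OmegaLimitSet f x) (hpy : p ∈ OmegaLimitSet f y)
    (hax : a ∈ OmegaLimitSet f x) (hay : a ∉ OmegaLimitSet f y) :
    ∃ z ∈ Icc (0 : ℝ) 1, OmegaLimitSet f x ∪ OmegaLimitSet f y ⊆ OmegaLimitSet f z := by
  set A := OmegaLimitSet f x with hA
  set B := OmegaLimitSet f y with hB
  have hAI : A ⊆ Icc 0 1 := omega_subset isClosed_Icc hI hx
  have hBI : B ⊆ Icc 0 1 := omega_subset isClosed_Icc hI hy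
  have hfA : MapsTo f A A := mapsTo_omega hf x
  have hfB : MapsTo f B B := mapsTo_omega hf y
  have hAch : ∀ c ∈ A, ∀ d ∈ A, ∀ δ > 0, ∃ n, Chain f A δ n c d := fun c hc d hd δ hδ =>
    omega_chain hf isCompact_Icc hI hx hc hd hδ
  have hCch : ∀ δ > 0, ∀ q ∈ A ∪ B, ∀ c ∈ A ∩ B,
      (∃ n, Chain f (Icc 0 1) δ n q c) ∧ ∃ n, Chain f (Icc 0 1) δ n c q := by
    rintro δ hδ q (hq | hq) c ⟨hcA, hcB⟩
    · obtain ⟨n, hn⟩ := hAch q hq c hcA δ hδ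
      obtain ⟨n', hn'⟩ := hAch c hcA q hq δ hδ
      exact ⟨⟨n, hn.mono hAI le_rfl⟩, n', hn'.mono hAI le_rfl⟩
    · obtain ⟨n, hn⟩ := omega_chain hf isCompact_Icc hI hy hq hcB hδ
      obtain ⟨n', hn'⟩ := omega_chain hf isCompact_Icc hI hy hcB hq hδ
      exact ⟨⟨n, hn.mono hBI le_rfl⟩, n', hn'.mono hBI le_rfl⟩
  by_cases hper : ∃ p' ∈ A ∩ B, ∃ k > 0, f^[k] p' = p'
  · obtain ⟨p', hp', k, hk, hpk⟩ := hper
    have hAinf : A.Infinite := by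
      intro hfin
      -- in a finite invariant set, sufficiently fine chains are true orbits
      obtain ⟨δ, hδ, hsep⟩ : ∃ δ > 0, ∀ u ∈ A, ∀ v ∈ A, dist u v < δ → u = v := by
        by_cases hnt : A.Nontrivial
        · refine ⟨A.infsep, (hfin.infsep_pos_iff_nontrivial).2 hnt, fun u hu v hv huv => ?_⟩
          by_contra hne
          exact absurd (infsep_le_dist_of_mem hu hv hne) (not_le.2 huv)
        · exact ⟨1, one_pos, fun u hu v hv _ => not_nontrivial_iff.1 hnt hu hv⟩
      obtain ⟨n, hn⟩ := hAch p' hp'.1 a hax δ hδ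
      have hstay : ∀ {n u v}, Chain f A δ n u v → u ∈ A ∧ (u ∈ B → v ∈ B) := by
        intro n u v h
        induction h with
        | nil hx => exact ⟨hx, id⟩
        | cons hx hxy h ih =>
          refine ⟨hx, fun hu => ih.2 ?_⟩
          rw [← hsep _ (hfA hx) _ ih.1 hxy]
          exact hfB hu
      exact hay ((hstay hn).2 hp'.2)
    obtain ⟨y₀, hy₀, t, ht, y₁, hy₁, h0, h1, hph⟩ :=
      exists_phase_of_periodic hk hI (hAI hp'.1) hpk hAinf
        (fun b hb δ hδ => (hCch δ hδ b (.inl hb) p' hp').2)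
    refine exists_omegaLimitSet_superset hf hI hsh (hAI hy₀) (hAI hy₁) h0 h1
      (Or.inl hp'.1) hph (fun δ hδ q hq => ?_) (fun δ hδ q hq => (hCch δ hδ q hq p' hp').1)
    obtain ⟨n, hn⟩ := (hCch δ hδ t (.inl ht) p' hp').1
    obtain ⟨n', hn'⟩ := (hCch δ hδ q hq p' hp').2
    exact ⟨_, hn.trans hn'⟩
  · push Not at hper
    have hABc : IsCompact (A ∩ B) :=
      isCompact_Icc.of_isClosed_subset ((isClosed_omega x).inter (isClosed_omega y))
        (inter_subset_left.trans hAI)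
    have hfAB : MapsTo f (A ∩ B) (A ∩ B) := fun u hu => ⟨hfA hu.1, hfB hu.2⟩
    have hch : ∀ i : ℕ, ∃ n, Chain f (Icc 0 1) (1 / ((i : ℝ) + 1)) n p a := fun i =>
      (hCch _ (by positivity) a (.inl hax) p ⟨hpx, hpy⟩).2
    choose l hl using hch
    obtain ⟨m, hm, φ, hφ, hlim⟩ := hABc.tendsto_subseq (x := fun i => f^[l i] p)
      (fun i => hfAB.iterate _ ⟨hpx, hpy⟩)
    have hma : m ≠ a := by
      rintro rfl
      exact hay hm.2
    have hphase : ∀ δ > 0, ∃ n, Chain f (Icc 0 1) δ n p m ∧ Chain f (Icc 0 1) δ n p a := by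
      intro δ hδ
      obtain ⟨K, hK⟩ := Metric.tendsto_atTop.1 hlim δ hδ
      obtain ⟨K', hK'⟩ := exists_nat_one_div_lt hδ
      set i := φ (max K K') with hi
      have hle : 1 / ((i : ℝ) + 1) ≤ δ := by
        refine le_trans ?_ hK'.le
        apply one_div_le_one_div_of_le (by positivity)
        have : (K' : ℝ) ≤ i := by exact_mod_cast (le_max_right K K').trans (hφ.id_le _)
        linarith
      have hla : Chain f (Icc 0 1) δ (l i) p a := (hl i).mono subset_rfl hle
      have hlm : dist (f^[l i] p) m < δ := hK _ (le_max_left _ _)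
      refine ⟨l i, ?_, hla⟩
      -- a chain of length `0` would give `a = p ∈ B`
      rcases hli : l i with _ | n
      · rw [hli] at hla
        cases hla
        exact absurd hpy hay
      · rw [hli] at hlm
        exact chain_of_dist_iterate_lt hI hδ (hAI hm.1) n p (hAI hpx) hlm
    have hinj : Function.Injective fun j => f^[j] m := by
      have hlt : ∀ i j, i < j → f^[i] m ≠ f^[j] m := by
        intro i j hij h
        refine hper (f^[i] m) (hfAB.iterate i hm) (j - i) (by omega) ?_
        rw [← Function.iterate_add_apply, Nat.sub_add_cancel hij.le, h]
      intro i j h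
      by_contra hne
      rcases lt_or_gt_of_ne hne with h' | h'
      · exact hlt _ _ h' h
      · exact hlt _ _ h' h.symm
    obtain ⟨t, h0, h1, ht⟩ := exists_between_chain hf hI (hAI hm.1) (hAI hax) hma hinj
    have htC : ∀ δ > 0, ∀ q ∈ A ∪ B, ∃ n, Chain f (Icc 0 1) δ n t q := by
      intro δ hδ q hq
      obtain ⟨j, n, hn⟩ := ht δ hδ
      obtain ⟨n', hn'⟩ := (hCch δ hδ q hq _ (hfAB.iterate j hm)).2
      exact ⟨_, hn.trans hn'⟩
    have hCp := fun δ (hδ : δ > 0) q hq => (hCch δ hδ q hq p ⟨hpx, hpy⟩).1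
    rcases le_total m a with h | h
    · rw [min_eq_left h] at h0
      rw [max_eq_right h] at h1
      exact exists_omegaLimitSet_superset hf hI hsh (hAI hm.1) (hAI hax) h0 h1
        (Or.inl hpx) hphase htC hCp
    · rw [min_eq_right h] at h0
      rw [max_eq_left h] at h1
      exact exists_omegaLimitSet_superset hf hI hsh (hAI hax) (hAI hm.1) h0 h1
        (Or.inl hpx) (fun δ hδ => (hphase δ hδ).imp fun _ h => h.symm) htC hCp

end OmegaShadowing

/-- For a continuous interval map with shadowing, any two distinct
maximal ω-limit sets are disjoint. -/
theorem maximal_omegaLimitSets_disjoint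
    (f : ℝ → ℝ)
    (hmaps : Set.MapsTo f (Set.Icc (0 : ℝ) 1) (Set.Icc (0 : ℝ) 1))
    (hcont : ContinuousOn f (Set.Icc (0 : ℝ) 1))
    (hshad : ShadowingOn f (Set.Icc (0 : ℝ) 1)) :
    ∀ A B : Set ℝ, IsMaximalOmegaLimitSet f A → IsMaximalOmegaLimitSet f B →
      A ≠ B → A ∩ B = ∅ := by
  intro A B hA hB hne
  -- replace `f` by the continuous map of `ℝ` that agrees with it on `[0,1]`
  obtain ⟨g, hg, hgf⟩ : ∃ g : ℝ → ℝ, Continuous g ∧ Set.EqOn g f (Set.Icc 0 1) :=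
    ⟨Set.IccExtend zero_le_one ((Set.Icc (0 : ℝ) 1).domRestrict f),
      hcont.domRestrict.Icc_extend', fun x hx => Set.IccExtend_of_mem _ _ hx⟩
  have hgI : Set.MapsTo g (Set.Icc (0 : ℝ) 1) (Set.Icc 0 1) := fun x hx => by
    rw [hgf hx]; exact hmaps hx
  have hit : ∀ n, ∀ x ∈ Set.Icc (0 : ℝ) 1, g^[n] x = f^[n] x := by
    intro n
    induction n with
    | zero => intro x _; rfl
    | succ n ih =>
      intro x hx
      rw [Function.iterate_succ_apply, Function.iterate_succ_apply, hgf hx]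
      exact ih _ (hmaps hx)
  have homega : ∀ x ∈ Set.Icc (0 : ℝ) 1, OmegaLimitSet g x = OmegaLimitSet f x := by
    intro x hx
    simp only [OmegaLimitSet, hit _ x hx]
  have hgsh : ShadowingOn g (Set.Icc (0 : ℝ) 1) := by
    intro ε hε
    obtain ⟨δ, hδ, h⟩ := hshad ε hε
    refine ⟨δ, hδ, fun x hx hxd => ?_⟩
    obtain ⟨z, hz, hzx⟩ := h x hx (fun n => by rw [← hgf (hx n)]; exact hxd n)
    exact ⟨z, hz, fun n => by rw [hit n z hz]; exact hzx n⟩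
  obtain ⟨⟨x, hx, hAx⟩, hAmax⟩ := hA
  obtain ⟨⟨y, hy, hBy⟩, hBmax⟩ := hB
  by_contra hnonempty
  obtain ⟨p, hpA, hpB⟩ := Set.nonempty_iff_ne_empty.2 hnonempty
  obtain ⟨a, haA, haB⟩ : ∃ a ∈ A, a ∉ B := by
    by_contra! hsub
    exact hne (hAmax B ⟨y, hy, hBy⟩ hsub).symm
  have hAg : A = OmegaLimitSet g x := by rw [homega x hx, hAx]
  have hBg : B = OmegaLimitSet g y := by rw [homega y hy, hBy]
  rw [hAg] at hpA haA
  rw [hBg] at hpB haB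
  obtain ⟨z, hz, hAB⟩ :=
    OmegaShadowing.exists_omega_superset_union hg hgI hgsh hx hy hpA hpB haA haB
  rw [← hAg, ← hBg, homega z hz] at hAB
  have h1 := hAmax _ ⟨z, hz, rfl⟩ (Set.subset_union_left.trans hAB)
  have h2 := hBmax _ ⟨z, hz, rfl⟩ (Set.subset_union_right.trans hAB)
  exact hne (h1.symm.trans h2)
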